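/- Consider the two-armed structured bandit with Θ = [−1, 1], μ_1(θ) = −θ·1{θ > 0}, μ_2(θ) = −1{θ ≤ 0}, where rewards are normally distributed with unit variance. There exists an algorithm and a constant C such that for all n: if θ > 0 then E_θ R_n(θ) ≤ C·(1/θ)·log log(1/θ) (for θ bounded away from 1, i.e. in the O-sense as θ → 0), and if θ ≤ 0 then E_θ R_n(θ) ≤ C, uniformly in n. -/

import Mathlib

open MeasureTheory ProbabilityTheory

namespace TwoArmedBandit

/-- A (deterministic, history-dependent) algorithm for a two-armed bandit: `choose t h` is the
arm played at round `t + 1` given the vector `h` of rewards observed in the first `t` rounds. -/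
structure Alg where
  choose : (t : ℕ) → (Fin t → ℝ) → Fin 2
  measurable_choose : ∀ t, Measurable (choose t)

/-- The canonical trajectory space: `ω t` is the reward received at round `t + 1`. -/
abbrev Traj : Type := ℕ → ℝ

/-- The arm played at round `t ∈ {1, 2, …}` on trajectory `ω`. -/
def armAt (alg : Alg) (t : ℕ) (ω : Traj) : Fin 2 :=
  alg.choose (t - 1) fun i => ω i.val

/-- `IsEnv μ alg P` asserts that for every `θ`, `P θ` is the law of the reward sequence
obtained when the algorithm `alg` interacts with the two-armed bandit environment in which arm
`i` yields independent `N(μ i θ, 1)`-distributed rewards: each `P θ` is a probability measure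
and, conditionally on the first `t` rewards, the reward at round `t + 1` is Gaussian with unit
variance and mean `μ i θ` where `i` is the arm chosen by the algorithm at round `t + 1`. -/
def IsEnv {Θ : Type*} (μ : Fin 2 → Θ → ℝ) (alg : Alg) (P : Θ → Measure Traj) : Prop :=
  (∀ θ, IsProbabilityMeasure (P θ)) ∧
  ∀ θ (t : ℕ) (f : (Fin (t + 1) → ℝ) → ℝ), Measurable f → (∃ C, ∀ x, |f x| ≤ C) →
    ∫ ω, f (fun i => ω i.val) ∂(P θ) =
      ∫ ω, ∫ x, f (Fin.snoc (fun i : Fin t => ω i.val) x)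
        ∂(gaussianReal (μ (alg.choose t fun i => ω i.val) θ) 1) ∂(P θ)

/-- The cumulative regret over the first `n` rounds on trajectory `ω`, under parameter `θ`. -/
noncomputable def regret {Θ : Type*} (μ : Fin 2 → Θ → ℝ) (alg : Alg) (θ : Θ) (n : ℕ)
    (ω : Traj) : ℝ :=
  ∑ t ∈ Finset.Icc 1 n, (max (μ 0 θ) (μ 1 θ) - μ (armAt alg t ω) θ)

/-- The expected cumulative regret `E_θ R_n(θ)`. -/
noncomputable def expRegret {Θ : Type*} (μ : Fin 2 → Θ → ℝ) (alg : Alg)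
    (P : Θ → Measure Traj) (θ : Θ) (n : ℕ) : ℝ :=
  ∫ ω, regret μ alg θ n ω ∂(P θ)

/-- The mean functions of the bandit of Figure 4(a): `Θ = [−1,1]`,
`μ₁(θ) = −θ·1{θ > 0}` and `μ₂(θ) = −1{θ ≤ 0}`. -/
noncomputable def muAmb : Fin 2 → ℝ → ℝ := fun i θ =>
  if i = 0 then (if 0 < θ then -θ else 0) else (if θ ≤ 0 then -1 else 0)

/-!
The policy explores only arm `0`, in phases of `2 ^ k` probes. By the law of the iterated
logarithm the number of probes needed to notice a mean `-θ` is of order `log log (1 / θ) / θ ^ 2`,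
and paying `θ` for each of them gives the rate of the theorem. Phase `k` rejects arm `0` at
confidence `1 / ((k + 1) * (k + 2))`, and a rejection leads to a run of plays of arm `1` that lasts
as long as the sum of all `reward + 1 / 2` stays above `-2`: forever with substantial probability
if arm `1` has mean `0`, and for a time of bounded expectation if it has mean `-1`.

In both cases a potential function of the state of the policy pays, by its expected decrease, for
each play of the worse arm, so its initial value bounds the expected number of such plays. If
arm `0` is good, rejections are summably rare and cost a bounded amount each. If it is bad, then
from a phase `K` with `2 ^ K` of order `log log (1 / θ) / θ ^ 2` on, the probability `1 / 3` of
reaching the next phase beats the doubling of the phase lengths.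
-/

open Real (exp)
open scoped ENNReal NNReal

section Environment

/-- The rewards observed in the first `t` rounds, in the form an `Alg` receives them. -/
def history (t : ℕ) (ω : Traj) : Fin t → ℝ := fun i => ω i.val

@[fun_prop]
lemma measurable_history (t : ℕ) : Measurable (history t) := by
  unfold history
  fun_prop

@[fun_prop]
lemma measurable_finSnoc (t : ℕ) :
    Measurable fun p : (Fin t → ℝ) × ℝ => (Fin.snoc p.1 p.2 : Fin (t + 1) → ℝ) := by
  refine measurable_pi_lambda _ (Fin.lastCases ?_ fun i => ?_)
  · simpa using measurable_snd
  · simp only [Fin.snoc_castSucc]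
    fun_prop

variable {Θ : Type*} {μ : Fin 2 → Θ → ℝ} {alg : Alg} {P : Θ → Measure Traj}

/-- The conditional law of the reward at round `t + 1` given the first `t` rewards, when `alg`
plays the bandit with parameter `θ`. -/
noncomputable def rewardKernel (μ : Fin 2 → Θ → ℝ) (alg : Alg) (θ : Θ) (t : ℕ) :
    Kernel (Fin t → ℝ) ℝ :=
  (Kernel.ofFunOfCountable fun i => gaussianReal (μ i θ) 1).comap (alg.choose t)
    (alg.measurable_choose t)

lemma rewardKernel_apply (μ : Fin 2 → Θ → ℝ) (alg : Alg) (θ : Θ) (t : ℕ) (h : Fin t → ℝ) :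
    rewardKernel μ alg θ t h = gaussianReal (μ (alg.choose t h) θ) 1 := rfl

instance (μ : Fin 2 → Θ → ℝ) (alg : Alg) (θ : Θ) (t : ℕ) :
    IsMarkovKernel (rewardKernel μ alg θ t) :=
  ⟨fun h => by rw [rewardKernel_apply]; infer_instance⟩

lemma IsEnv.map_history_succ (hP : IsEnv μ alg P) (θ : Θ) (t : ℕ) :
    (P θ).map (history (t + 1)) =
      ((P θ).map (history t) ⊗ₘ rewardKernel μ alg θ t).map
        fun p => (Fin.snoc p.1 p.2 : Fin (t + 1) → ℝ) := by
  have := hP.1 θ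
  refine ext_of_forall_integral_eq_of_IsFiniteMeasure fun f => ?_
  have hf : StronglyMeasurable f := f.continuous.stronglyMeasurable
  have hf_snoc : StronglyMeasurable fun p : (Fin t → ℝ) × ℝ => f (Fin.snoc p.1 p.2) :=
    hf.comp_measurable (measurable_finSnoc t)
  rw [integral_map (by fun_prop) hf.aestronglyMeasurable,
    integral_map (by fun_prop) hf.aestronglyMeasurable,
    Measure.integral_compProd
      (.of_bound hf_snoc.aestronglyMeasurable ‖f‖ (ae_of_all _ fun _ => f.norm_coe_le_norm _)),
    integral_map (by fun_prop) hf_snoc.integral_kernel_prod_right'.aestronglyMeasurable]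
  exact hP.2 θ t f hf.measurable ⟨‖f‖, f.norm_coe_le_norm⟩

lemma IsEnv.lintegral_history_succ (hP : IsEnv μ alg P) (θ : Θ) (t : ℕ)
    {f : (Fin (t + 1) → ℝ) → ℝ≥0∞} (hf : Measurable f) :
    ∫⁻ ω, f (history (t + 1) ω) ∂P θ =
      ∫⁻ ω, ∫⁻ x, f (Fin.snoc (history t ω) x)
        ∂gaussianReal (μ (alg.choose t (history t ω)) θ) 1 ∂P θ := by
  have := hP.1 θ
  have hf_snoc : Measurable fun p : (Fin t → ℝ) × ℝ => f (Fin.snoc p.1 p.2) :=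
    hf.comp (measurable_finSnoc t)
  rw [← lintegral_map hf (measurable_history _), hP.map_history_succ,
    lintegral_map hf (measurable_finSnoc t), Measure.lintegral_compProd hf_snoc,
    lintegral_map hf_snoc.lintegral_kernel_prod_right' (measurable_history t)]
  rfl

lemma regret_eq_mul_sum_ite {θ : Θ} {i j : Fin 2} (hij : i ≠ j) (hle : μ i θ ≤ μ j θ)
    (alg : Alg) (n : ℕ) (ω : Traj) :
    regret μ alg θ n ω = (μ j θ - μ i θ) *
      ∑ t ∈ Finset.range n, if alg.choose t (history t ω) = i then 1 else 0 := by
  have hmax : max (μ 0 θ) (μ 1 θ) = μ j θ := by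
    fin_cases i <;> fin_cases j <;> simp_all
  have hgap (a : Fin 2) : μ j θ - μ a θ = (μ j θ - μ i θ) * if a = i then 1 else 0 := by
    obtain rfl | rfl : a = i ∨ a = j := by lia
    · simp
    · simp [hij.symm]
  calc regret μ alg θ n ω
    _ = ∑ t ∈ Finset.Ico (0 + 1) (n + 1), (μ j θ - μ (armAt alg t ω) θ) := by
      rw [regret, hmax, zero_add, Finset.Ico_add_one_right_eq_Icc]
    _ = ∑ t ∈ Finset.range n, (μ j θ - μ (alg.choose t (history t ω)) θ) := by
      rw [Finset.range_eq_Ico, ← Finset.sum_Ico_add']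
      rfl
    _ = _ := by
      rw [Finset.mul_sum]
      exact Finset.sum_congr rfl fun _ _ => hgap _

end Environment

section Automaton

/-- A bandit algorithm that remembers only a state: it plays `arm s` in state `s` and moves to
`step s x` on receiving the reward `x`. -/
structure Automaton (S : Type*) [MeasurableSpace S] where
  init : S
  arm : S → Fin 2
  step : S → ℝ → S
  measurable_arm : Measurable arm
  measurable_step : Measurable fun p : S × ℝ => step p.1 p.2

variable {S : Type*} [MeasurableSpace S]

namespace Automaton

/-- The state reached after observing the rewards `h`. -/
def run (M : Automaton S) : (t : ℕ) → (Fin t → ℝ) → S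
  | 0, _ => M.init
  | t + 1, h => M.step (M.run t (Fin.init h)) (h (Fin.last t))

@[simp]
lemma run_snoc (M : Automaton S) {t : ℕ} (h : Fin t → ℝ) (x : ℝ) :
    M.run (t + 1) (Fin.snoc h x) = M.step (M.run t h) x := by
  simp [run]

@[fun_prop]
lemma measurable_run (M : Automaton S) : ∀ t, Measurable (M.run t)
  | 0 => measurable_const
  | t + 1 => by
    have hinit : Measurable fun h : Fin (t + 1) → ℝ => (Fin.init h : Fin t → ℝ) := by
      unfold Fin.init
      fun_prop
    exact M.measurable_step.comp
      (((M.measurable_run t).comp hinit).prodMk (measurable_pi_apply (Fin.last t)))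

lemma run_mem (M : Automaton S) {I : Set S} (hinit : M.init ∈ I)
    (hstep : ∀ s ∈ I, ∀ x, M.step s x ∈ I) : ∀ t h, M.run t h ∈ I
  | 0, _ => hinit
  | t + 1, _ => hstep _ (M.run_mem hinit hstep t _) _

/-- The `Alg` that plays the automaton. -/
def toAlg (M : Automaton S) : Alg where
  choose t h := M.arm (M.run t h)
  measurable_choose t := M.measurable_arm.comp (M.measurable_run t)

end Automaton

variable {M : Automaton S} {Θ : Type*} {μ : Fin 2 → Θ → ℝ} {P : Θ → Measure Traj} {θ : Θ}
  {I : Set S}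

lemma IsEnv.sum_lintegral_add_lintegral_le_of_drift (hP : IsEnv μ M.toAlg P)
    {c V : S → ℝ≥0∞} (hc : Measurable c) (hV : Measurable V)
    (hinit : M.init ∈ I) (hstep : ∀ s ∈ I, ∀ x, M.step s x ∈ I)
    (hdrift : ∀ s ∈ I, c s + ∫⁻ x, V (M.step s x) ∂gaussianReal (μ (M.arm s) θ) 1 ≤ V s)
    (n : ℕ) :
    ∑ t ∈ Finset.range n, ∫⁻ ω, c (M.run t (history t ω)) ∂P θ +
      ∫⁻ ω, V (M.run n (history n ω)) ∂P θ ≤ V M.init := by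
  have := hP.1 θ
  induction n with
  | zero => simp [Automaton.run]
  | succ n ih =>
    refine le_trans ?_ ih
    rw [Finset.sum_range_succ, add_assoc]
    gcongr
    rw [hP.lintegral_history_succ θ n (f := fun h => V (M.run (n + 1) h)) (by fun_prop),
      ← lintegral_add_left (by fun_prop)]
    refine lintegral_mono fun ω => ?_
    simp only [M.run_snoc]
    exact hdrift _ (M.run_mem hinit hstep n (history n ω))

lemma IsEnv.expRegret_le_of_drift (hP : IsEnv μ M.toAlg P) {i j : Fin 2} (hij : i ≠ j)
    (hle : μ i θ ≤ μ j θ) {V : S → ℝ} (hV : Measurable V) (hV_init : 0 ≤ V M.init)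
    (hinit : M.init ∈ I) (hstep : ∀ s ∈ I, ∀ x, M.step s x ∈ I)
    (hdrift : ∀ s ∈ I, ENNReal.ofReal (if M.arm s = i then 1 else 0) +
      ∫⁻ x, ENNReal.ofReal (V (M.step s x)) ∂gaussianReal (μ (M.arm s) θ) 1 ≤
        ENNReal.ofReal (V s))
    (n : ℕ) :
    expRegret μ M.toAlg P θ n ≤ (μ j θ - μ i θ) * V M.init := by
  let play (s : S) : ℝ := if M.arm s = i then 1 else 0
  have hplay : Measurable play :=
    Measurable.ite (M.measurable_arm (measurableSet_singleton i)) measurable_const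
      measurable_const
  have hplay_nonneg (s : S) : 0 ≤ play s := by
    dsimp only [play]
    positivity
  have hreg (ω : Traj) : regret μ M.toAlg θ n ω =
      (μ j θ - μ i θ) * ∑ t ∈ Finset.range n, play (M.run t (history t ω)) :=
    regret_eq_mul_sum_ite hij hle M.toAlg n ω
  simp_rw [expRegret, hreg, integral_const_mul]
  refine mul_le_mul_of_nonneg_left ?_ (sub_nonneg.2 hle)
  rw [integral_eq_lintegral_of_nonneg_ae
    (ae_of_all _ fun ω => Finset.sum_nonneg fun _ _ => hplay_nonneg _)
    (Measurable.aestronglyMeasurable (by fun_prop))]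
  refine ENNReal.toReal_le_of_le_ofReal hV_init ?_
  simp_rw [ENNReal.ofReal_sum_of_nonneg fun _ _ => hplay_nonneg _]
  rw [lintegral_finsetSum _ fun _ _ => by fun_prop]
  exact le_self_add.trans (hP.sum_lintegral_add_lintegral_le_of_drift hplay.ennreal_ofReal
    hV.ennreal_ofReal hinit hstep hdrift n)

end Automaton

section Gaussian

variable {m l A B : ℝ} {v : ℝ≥0}

lemma lintegral_ofReal_add_mul_exp_gaussianReal (hA : 0 ≤ A) (hB : 0 ≤ B) :
    ∫⁻ x, ENNReal.ofReal (A + B * exp (l * x)) ∂gaussianReal m v =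
      ENNReal.ofReal (A + B * exp (m * l + v * l ^ 2 / 2)) := by
  have hint : Integrable (fun x => B * exp (l * x)) (gaussianReal m v) :=
    (integrable_exp_mul_gaussianReal l).const_mul B
  have hmgf : ∫ x, exp (l * x) ∂gaussianReal m v = exp (m * l + v * l ^ 2 / 2) := by
    simpa [mgf] using congrFun (mgf_id_gaussianReal (μ := m) (v := v)) l
  rw [← ofReal_integral_eq_lintegral_ofReal (f := fun x => A + B * exp (l * x))
      ((integrable_const A).add hint)
      (ae_of_all _ fun x => by positivity),
    integral_add (integrable_const A) hint, integral_const_mul, hmgf]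
  simp

lemma ofReal_add_lintegral_gaussianReal_le {f : ℝ → ℝ} {a b c w : ℝ} (hA : 0 ≤ A)
    (hB : 0 ≤ B) (hc : 0 ≤ c) (hf : ∀ x, f x ≤ A + B * exp (b + l * x)) (ha : m * l ≤ a)
    (hw : c + (A + B * exp (b + a + v * l ^ 2 / 2)) ≤ w) :
    ENNReal.ofReal c + ∫⁻ x, ENNReal.ofReal (f x) ∂gaussianReal m v ≤ ENNReal.ofReal w :=
  calc ENNReal.ofReal c + ∫⁻ x, ENNReal.ofReal (f x) ∂gaussianReal m v
    _ ≤ ENNReal.ofReal c +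
        ∫⁻ x, ENNReal.ofReal (A + B * exp b * exp (l * x)) ∂gaussianReal m v := by
      gcongr with x
      rw [mul_assoc, ← Real.exp_add]
      exact hf x
    _ = ENNReal.ofReal (c + (A + B * exp (b + (m * l + v * l ^ 2 / 2)))) := by
      rw [lintegral_ofReal_add_mul_exp_gaussianReal hA (by positivity), mul_assoc,
        ← Real.exp_add, ENNReal.ofReal_add hc (by positivity)]
    _ ≤ ENNReal.ofReal (c + (A + B * exp (b + a + v * l ^ 2 / 2))) := by
      rw [add_assoc b]
      gcongr
    _ ≤ ENNReal.ofReal w := ENNReal.ofReal_le_ofReal hw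

end Gaussian

section Policy

/-- Mode of the policy `phasedProbing`: `probe k r` plays arm `0` in phase `k`, with `r` more
probes to follow, and `commit k` plays arm `1` after phase `k` has rejected arm `0`. -/
inductive Mode
  | probe (k r : ℕ)
  | commit (k : ℕ)

namespace Mode

instance : MeasurableSpace Mode := ⊤

instance : DiscreteMeasurableSpace Mode := ⟨fun _ => trivial⟩

instance : Countable Mode :=
  let encode : Mode → ℕ × ℕ ⊕ ℕ
    | probe k r => .inl (k, r)
    | commit k => .inr k
  Function.Injective.countable (f := encode) fun a b h => by
    cases a <;> cases b <;> simp_all [encode]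

end Mode

/-- The mode together with a running statistic: the sum of the rewards of the current phase while
probing, and the remaining credit of arm `1` while committed. -/
abbrev State : Type := Mode × ℝ

/-- The logarithm of the confidence level `(k + 1) * (k + 2)` of phase `k`. The inverse levels have
a telescoping sum. -/
noncomputable def logConfidence (k : ℕ) : ℝ := Real.log ((k + 1) * (k + 2))

/-- Phase `k` rejects arm `0` if its `2 ^ k` probes add up to at most `-threshold k`. -/
noncomputable def threshold (k : ℕ) : ℝ := √(2 * 2 ^ k * logConfidence k)

/-- The state at the start of phase `k`, which consists of `2 ^ k` probes. -/
def phaseStart (k : ℕ) : State := (.probe k (2 ^ k - 1), 0)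

/-- The transition of `phasedProbing`. Because of the added `1 / 2`, the credit drifts up while
committed if arm `1` has nonnegative mean, and down if its mean is at most `-1`. -/
noncomputable def nextState : State → ℝ → State
  | (.probe k (r + 1), y), x => (.probe k r, y + x)
  | (.probe k 0, y), x => if y + x ≤ -threshold k then (.commit k, 2) else phaseStart (k + 1)
  | (.commit k, y), x =>
    if y + x + 1 / 2 ≤ 0 then phaseStart (k + 1) else (.commit k, y + x + 1 / 2)

/-- The arm played by `phasedProbing`. -/
def nextArm : State → Fin 2
  | (.probe _ _, _) => 0
  | (.commit _, _) => 1

lemma measurable_nextState : Measurable fun p : State × ℝ => nextState p.1 p.2 := by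
  suffices Measurable fun p : Mode × ℝ × ℝ => nextState (p.1, p.2.1) p.2.2 from
    this.comp MeasurableEquiv.prodAssoc.measurable
  refine measurable_from_prod_countable_right ?_
  rintro (⟨k, _ | r⟩ | k) <;> simp only [nextState]
  · exact .ite (measurableSet_le (by fun_prop) (by fun_prop)) (by fun_prop) (by fun_prop)
  · fun_prop
  · exact .ite (measurableSet_le (by fun_prop) (by fun_prop)) (by fun_prop) (by fun_prop)

lemma measurable_nextArm : Measurable nextArm :=
  measurable_from_prod_countable_right fun m => by cases m <;> exact measurable_const

/-- The policy of the theorem: phases of `2 ^ k` probes of arm `0`, each followed by a commitment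
to arm `1` if the probes were too negative, until the credit of arm `1` is exhausted. -/
noncomputable def phasedProbing : Automaton State where
  init := phaseStart 0
  arm := nextArm
  step := nextState
  measurable_arm := measurable_nextArm
  measurable_step := measurable_nextState

/-- The states in which the credit of arm `1` is not exhausted. -/
def positiveCredit : Set State := {s | ∀ k, s.1 = .commit k → 0 < s.2}

lemma phaseStart_mem_positiveCredit (k : ℕ) : phaseStart k ∈ positiveCredit := by
  simp [positiveCredit, phaseStart]

lemma nextState_mem_positiveCredit (s : State) (x : ℝ) : nextState s x ∈ positiveCredit := by
  rcases s with ⟨⟨k, _ | r⟩ | k, y⟩ <;>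
    grind [nextState, positiveCredit, phaseStart]

end Policy

section Confidence

lemma logConfidence_nonneg (k : ℕ) : 0 ≤ logConfidence k :=
  Real.log_nonneg (by nlinarith [k.cast_nonneg (α := ℝ)])

lemma exp_neg_logConfidence (k : ℕ) :
    exp (-logConfidence k) = 1 / (((k : ℝ) + 1) * (k + 2)) := by
  rw [logConfidence, Real.exp_neg, Real.exp_log (by positivity), one_div]

lemma logConfidence_le_two_mul_log (k : ℕ) : logConfidence k ≤ 2 * Real.log (k + 2) := by
  rw [← Real.log_rpow (by positivity), Real.rpow_two]
  exact Real.log_le_log (by positivity) (by nlinarith)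

lemma logConfidence_succ_le {k : ℕ} (hk : 1 ≤ k) :
    logConfidence (k + 1) ≤ 2 * logConfidence k := by
  have hk' : (1 : ℝ) ≤ k := mod_cast hk
  rw [logConfidence, logConfidence, ← Real.log_rpow (by positivity), Real.rpow_two]
  refine Real.log_le_log (by positivity) ?_
  push_cast
  have : (k : ℝ) + 3 ≤ (k + 1) ^ 2 * (k + 2) := by nlinarith
  nlinarith

/-- The exponential tilt optimizing the Chernoff bound for `2 ^ k` standard Gaussian rewards to
add up to at most `-threshold k`. -/
noncomputable def tilt (k : ℕ) : ℝ := √(2 * logConfidence k / 2 ^ k)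

lemma tilt_nonneg (k : ℕ) : 0 ≤ tilt k := Real.sqrt_nonneg _

lemma tilt_sq_mul (k : ℕ) : tilt k ^ 2 * 2 ^ k = 2 * logConfidence k := by
  have := logConfidence_nonneg k
  rw [tilt, Real.sq_sqrt (by positivity)]
  field_simp

lemma tilt_mul_threshold (k : ℕ) : tilt k * threshold k = 2 * logConfidence k := by
  have := logConfidence_nonneg k
  rw [tilt, threshold, ← Real.sqrt_mul (by positivity), Real.sqrt_eq_iff_eq_sq (by positivity)
    (by positivity)]
  field_simp

/-- Phase `k` is long enough to reject arm `0` reliably when its mean is at most `-Δ`: its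
threshold is at most half the deviation `2 ^ k * Δ` of the sum of its probes. -/
def Detectable (Δ : ℝ) (k : ℕ) : Prop := 8 * logConfidence k ≤ 2 ^ k * Δ ^ 2

lemma Detectable.mono {Δ : ℝ} {K k : ℕ} (hK : 1 ≤ K) (h : Detectable Δ K) (hk : K ≤ k) :
    Detectable Δ k := by
  induction k, hk using Nat.le_induction with
  | base => exact h
  | succ k hk ih =>
    have := logConfidence_succ_le (hK.trans hk)
    unfold Detectable at ih ⊢
    rw [pow_succ]
    linarith

lemma Detectable.threshold_le {Δ : ℝ} (hΔ : 0 ≤ Δ) {k : ℕ} (h : Detectable Δ k) :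
    threshold k ≤ 2 ^ k * Δ / 2 := by
  refine Real.sqrt_le_iff.2 ⟨by positivity, ?_⟩
  have := mul_le_mul_of_nonneg_left h (show (0 : ℝ) ≤ 2 ^ k / 4 by positivity)
  linarith

lemma eight_le_log_one_div {Δ : ℝ} (hΔ : 0 < Δ) (hΔ₀ : Δ ≤ exp (-8)) :
    8 ≤ Real.log (1 / Δ) := by
  rw [one_div, Real.log_inv, le_neg]
  exact (Real.log_le_iff_le_exp hΔ).2 hΔ₀

lemma one_le_log_log_one_div {Δ : ℝ} (hΔ : 0 < Δ) (hΔ₀ : Δ ≤ exp (-8)) :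
    1 ≤ Real.log (Real.log (1 / Δ)) := by
  have hlog := eight_le_log_one_div hΔ hΔ₀
  rw [Real.le_log_iff_exp_le (by linarith)]
  linarith [Real.exp_one_lt_d9]

lemma natCast_add_two_le_of_two_pow_le {Δ : ℝ} (hΔ : 0 < Δ) (hΔ₀ : Δ ≤ exp (-8)) {K : ℕ}
    (hK : 2 ^ K ≤ 64 * Real.log (Real.log (1 / Δ)) / Δ ^ 2) :
    (K : ℝ) + 2 ≤ 6 * Real.log (1 / Δ) := by
  have hl := eight_le_log_one_div hΔ hΔ₀
  have hL := one_le_log_log_one_div hΔ hΔ₀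
  have hlog := Real.log_le_log (by positivity) hK
  have hΔ_log : Real.log (1 / Δ) = -Real.log Δ := by rw [one_div, Real.log_inv]
  set l := Real.log (1 / Δ)
  have h64 : Real.log 64 = 6 * Real.log 2 := by
    rw [show (64 : ℝ) = 2 ^ 6 by norm_num, Real.log_pow]
    norm_num
  rw [Real.log_pow, Real.log_div (by positivity) (by positivity),
    Real.log_mul (by norm_num) (by positivity), Real.log_pow, h64] at hlog
  have hlogL : Real.log (Real.log l) ≤ l := by
    have := Real.log_le_sub_one_of_pos (show 0 < Real.log l by linarith)
    have := Real.log_le_sub_one_of_pos (show 0 < l by linarith)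
    linarith
  push_cast at hlog
  nlinarith [Real.log_two_gt_d9]

lemma exists_detectable {Δ : ℝ} (hΔ : 0 < Δ) (hΔ₀ : Δ ≤ exp (-8)) :
    ∃ K, 1 ≤ K ∧ Detectable Δ K ∧
      (2 : ℝ) ^ K ≤ 64 * Real.log (Real.log (1 / Δ)) / Δ ^ 2 := by
  have hl := eight_le_log_one_div hΔ hΔ₀
  have hL := one_le_log_log_one_div hΔ hΔ₀
  have hΔ₁ : Δ ≤ 1 := hΔ₀.trans (Real.exp_le_one_iff.2 (by norm_num))
  have hlower : 1 ≤ 32 * Real.log (Real.log (1 / Δ)) / Δ ^ 2 := by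
    rw [le_div_iff₀ (by positivity)]
    nlinarith
  obtain ⟨n, hn_le, hn_lt⟩ := exists_nat_pow_near hlower one_lt_two
  have hupper : (2 : ℝ) ^ (n + 1) ≤ 64 * Real.log (Real.log (1 / Δ)) / Δ ^ 2 :=
    calc (2 : ℝ) ^ (n + 1) = 2 ^ n * 2 := pow_succ _ _
      _ ≤ 32 * Real.log (Real.log (1 / Δ)) / Δ ^ 2 * 2 := by gcongr
      _ = _ := by ring
  refine ⟨n + 1, n.succ_pos, ?_, hupper⟩
  have hlog := Real.log_le_log (by positivity) (natCast_add_two_le_of_two_pow_le hΔ hΔ₀ hupper)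
  have hlog6 : Real.log 6 ≤ Real.log (Real.log (1 / Δ)) :=
    Real.log_le_log (by norm_num) (by linarith)
  rw [Real.log_mul (by norm_num) (by positivity)] at hlog
  calc 8 * logConfidence (n + 1)
    _ ≤ 8 * (2 * Real.log ((n + 1 : ℕ) + 2)) := by gcongr; exact logConfidence_le_two_mul_log _
    _ ≤ 32 * Real.log (Real.log (1 / Δ)) := by linarith
    _ ≤ 2 ^ (n + 1) * Δ ^ 2 := ((div_lt_iff₀ (by positivity)).1 hn_lt).le

end Confidence

section GoodArmZero

/-- A bound on the expected number of future plays of arm `1` when its mean is at most `-1` and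
the mean of arm `0` is nonnegative. While probing, the exponential is the Chernoff bound on the
probability of a rejection in the current phase; the last term accounts for the later phases. While
committed, `exp (y / 2)` shrinks on average by a factor `exp (-1 / 8) ≤ 1 - 1 / 9` per play. -/
noncomputable def commitPotential : State → ℝ
  | (.probe k r, y) => 9 * exp 1 *
      exp (-tilt k * (y + threshold k) + tilt k ^ 2 * (r + 1) / 2) + 9 * exp 1 / (k + 2)
  | (.commit k, y) => 9 * exp (y / 2) + 9 * exp 1 / (k + 2)

lemma measurable_commitPotential : Measurable commitPotential := by
  refine measurable_from_prod_countable_right ?_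
  rintro (_ | _) <;> simp only [commitPotential] <;> fun_prop

lemma cast_two_pow_sub_one_add_one (k : ℕ) : ((2 ^ k - 1 : ℕ) : ℝ) + 1 = 2 ^ k := by
  rw [Nat.cast_pred (by positivity)]
  simp

lemma commitPotential_phaseStart (k : ℕ) :
    commitPotential (phaseStart k) = 9 * exp 1 / (k + 1) := by
  have hexp : -tilt k * (0 + threshold k) + tilt k ^ 2 * 2 ^ k / 2 = -logConfidence k := by
    linarith [tilt_sq_mul k, tilt_mul_threshold k]
  rw [phaseStart, commitPotential, cast_two_pow_sub_one_add_one, hexp, exp_neg_logConfidence]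
  field_simp
  ring

lemma commitPotential_phaseStart_succ (k : ℕ) :
    commitPotential (phaseStart (k + 1)) = 9 * exp 1 / (k + 2) := by
  rw [commitPotential_phaseStart]
  push_cast
  ring

lemma commitPotential_nextState_probe_le (k r : ℕ) (y x : ℝ) :
    commitPotential (nextState (.probe k r, y) x) ≤ 9 * exp 1 / (k + 2) + 9 * exp 1 *
      exp (-tilt k * (y + threshold k) + tilt k ^ 2 * r / 2 + -tilt k * x) := by
  cases r with
  | zero =>
    rw [nextState]
    split_ifs with hreject
    · have hexp : 0 ≤ -tilt k * (y + threshold k) + tilt k ^ 2 * (0 : ℕ) / 2 + -tilt k * x := by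
        have := mul_nonneg (tilt_nonneg k) (show 0 ≤ -threshold k - (y + x) by linarith)
        push_cast
        linarith
      have := mul_le_mul_of_nonneg_left (Real.one_le_exp hexp)
        (show 0 ≤ 9 * exp 1 by positivity)
      rw [commitPotential, div_self two_ne_zero]
      linarith
    · rw [commitPotential_phaseStart_succ]
      exact le_add_of_nonneg_right (by positivity)
  | succ r =>
    rw [nextState, commitPotential, add_comm]
    push_cast
    apply le_of_eq
    ring_nf

lemma commitPotential_nextState_commit_le (k : ℕ) (y x : ℝ) :
    commitPotential (nextState (.commit k, y) x) ≤
      9 * exp 1 / (k + 2) + 9 * exp ((y + 1 / 2) / 2 + 1 / 2 * x) := by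
  rw [nextState]
  split_ifs
  · rw [commitPotential_phaseStart_succ]
    exact le_add_of_nonneg_right (by positivity)
  · rw [commitPotential, add_comm]
    apply le_of_eq
    ring_nf

lemma commitPotential_drift {m : Fin 2 → ℝ} (hm₀ : 0 ≤ m 0) (hm₁ : m 1 ≤ -1) (s : State)
    (hs : s ∈ positiveCredit) :
    ENNReal.ofReal (if nextArm s = 1 then 1 else 0) +
      ∫⁻ x, ENNReal.ofReal (commitPotential (nextState s x)) ∂gaussianReal (m (nextArm s)) 1 ≤
      ENNReal.ofReal (commitPotential s) := by
  rcases s with ⟨⟨k, r⟩ | k, y⟩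
  · refine ofReal_add_lintegral_gaussianReal_le (a := 0) (by positivity) (by positivity)
      (by positivity) (commitPotential_nextState_probe_le k r y)
      (mul_nonpos_of_nonneg_of_nonpos hm₀ (neg_nonpos.2 (tilt_nonneg k))) ?_
    rw [nextArm, if_neg zero_ne_one, zero_add, add_comm, commitPotential, NNReal.coe_one]
    apply le_of_eq
    ring_nf
  · refine ofReal_add_lintegral_gaussianReal_le (a := -1 / 2) (by positivity) (by positivity)
      (by positivity) (commitPotential_nextState_commit_le k y)
      (by rw [nextArm]; linarith) ?_
    have hexp : (y + 1 / 2) / 2 + -1 / 2 + ((1 : ℝ≥0) : ℝ) * (1 / 2) ^ 2 / 2 =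
        y / 2 + -(1 / 8) := by
      push_cast
      ring
    have hdecay : exp (-(1 / 8)) ≤ 8 / 9 := by
      rw [Real.exp_neg, inv_le_comm₀ (Real.exp_pos _) (by norm_num)]
      linarith [Real.add_one_le_exp (1 / 8 : ℝ)]
    have hy : 1 ≤ exp (y / 2) := Real.one_le_exp (by linarith [hs k rfl])
    rw [nextArm, if_pos rfl, commitPotential, hexp, Real.exp_add]
    nlinarith

end GoodArmZero

section BadArmZero

/-- A bound on the expected number of probes from the start of phase `k` on, when arm `0` is
detectably bad from phase `K` on. Phases before `K` are paid for in full. From `K` on, each next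
phase is reached with probability at most `1 / 3`, so that the expected numbers of probes form a
geometric series of ratio `2 / 3`. -/
noncomputable def probeBudget (K k : ℕ) : ℝ := if k ≤ K then 4 * 2 ^ K - 2 ^ k else 3 * 2 ^ k

lemma probeBudget_nonneg (K k : ℕ) : 0 ≤ probeBudget K k := by
  unfold probeBudget
  split_ifs with h
  · have : (2 : ℝ) ^ k ≤ 2 ^ K := pow_le_pow_right₀ one_le_two h
    have : (0 : ℝ) < 2 ^ K := by positivity
    linarith
  · positivity

lemma two_pow_add_probeBudget_succ {K k : ℕ} (h : k < K) :
    2 ^ k + probeBudget K (k + 1) = probeBudget K k := by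
  rw [probeBudget, probeBudget, if_pos (Nat.succ_le_of_lt h), if_pos h.le, pow_succ]
  ring

lemma two_pow_add_probeBudget_succ_div_three {K k : ℕ} (h : K ≤ k) :
    2 ^ k + probeBudget K (k + 1) / 3 = probeBudget K k := by
  rw [probeBudget, probeBudget, if_neg (by lia), pow_succ]
  split_ifs with hk
  · rw [hk.antisymm h]
    ring
  · ring

/-- A bound on the expected number of future plays of arm `0` when its mean is at most `-Δ` and
the mean of arm `1` is nonnegative. A commitment with credit `y` is abandoned with probability at
most `exp (-y)`, hence the term `exp (-2)`; the last exponential is the Chernoff bound on the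
probability that the current phase fails to reject arm `0`, with exponent `Δ / 2`, at which the
cumulant generating function of a probe is at most `-Δ ^ 2 / 2 + Δ ^ 2 / 8 = -3 * Δ ^ 2 / 8`. -/
noncomputable def probePotential (K : ℕ) (Δ : ℝ) : State → ℝ
  | (.probe k r, y) => r + 1 + probeBudget K (k + 1) *
      if k < K then 1
      else exp (-2) + exp (Δ / 2 * (y + threshold k) - (r + 1) * (3 * Δ ^ 2 / 8))
  | (.commit k, y) => probeBudget K (k + 1) * exp (-y)

variable {K : ℕ} {Δ : ℝ}

lemma measurable_probePotential (K : ℕ) (Δ : ℝ) : Measurable (probePotential K Δ) := by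
  refine measurable_from_prod_countable_right ?_
  rintro (⟨k, r⟩ | k) <;> simp only [probePotential]
  · split_ifs <;> fun_prop
  · fun_prop

lemma exp_neg_two_le_one_div_six : exp (-2) ≤ 1 / 6 := by
  have h : exp 2 = exp 1 * exp 1 := by rw [← Real.exp_add]; norm_num
  rw [Real.exp_neg, inv_le_comm₀ (Real.exp_pos _) (by norm_num), h]
  nlinarith [Real.exp_one_gt_d9]

lemma exp_threshold_sub_le_one_div_six (hΔ : 0 ≤ Δ) {k : ℕ} (hk : 1 ≤ k) (h : Detectable Δ k) :
    exp (Δ / 2 * (0 + threshold k) - 2 ^ k * (3 * Δ ^ 2 / 8)) ≤ 1 / 6 := by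
  have hk' : (1 : ℝ) ≤ k := mod_cast hk
  have hthreshold := mul_le_mul_of_nonneg_left (h.threshold_le hΔ) (show 0 ≤ Δ / 2 by positivity)
  calc exp (Δ / 2 * (0 + threshold k) - 2 ^ k * (3 * Δ ^ 2 / 8))
    _ ≤ exp (-logConfidence k) := by
      gcongr
      unfold Detectable at h
      nlinarith
    _ = 1 / (((k : ℝ) + 1) * (k + 2)) := exp_neg_logConfidence k
    _ ≤ 1 / 6 := by
      gcongr
      nlinarith

lemma probePotential_phaseStart_le (hΔ : 0 ≤ Δ) (hK : 1 ≤ K) (h : Detectable Δ K) (k : ℕ) :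
    probePotential K Δ (phaseStart k) ≤ probeBudget K k := by
  rw [phaseStart, probePotential, cast_two_pow_sub_one_add_one]
  split_ifs with hk
  · rw [mul_one, two_pow_add_probeBudget_succ hk]
  · push Not at hk
    rw [← two_pow_add_probeBudget_succ_div_three hk]
    have hfail := exp_threshold_sub_le_one_div_six hΔ (hK.trans hk) (h.mono hK hk)
    have := mul_le_mul_of_nonneg_left (add_le_add exp_neg_two_le_one_div_six hfail)
      (probeBudget_nonneg K (k + 1))
    linarith

lemma probePotential_nextState_probe_le_of_lt (hΔ : 0 ≤ Δ) (hK : 1 ≤ K) (h : Detectable Δ K)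
    {k : ℕ} (hk : k < K) (r : ℕ) (y x : ℝ) :
    probePotential K Δ (nextState (.probe k r, y) x) ≤ r + probeBudget K (k + 1) := by
  have hbudget := probeBudget_nonneg K (k + 1)
  cases r with
  | zero =>
    rw [nextState, Nat.cast_zero, zero_add]
    split_ifs
    · exact mul_le_of_le_one_right hbudget (Real.exp_le_one_iff.2 (by norm_num))
    · exact probePotential_phaseStart_le hΔ hK h (k + 1)
  | succ r => simp [nextState, probePotential, hk]

lemma probePotential_nextState_probe_le_of_ge (hΔ : 0 ≤ Δ) (hK : 1 ≤ K) (h : Detectable Δ K)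
    {k : ℕ} (hk : K ≤ k) (r : ℕ) (y x : ℝ) :
    probePotential K Δ (nextState (.probe k r, y) x) ≤
      r + probeBudget K (k + 1) * exp (-2) + probeBudget K (k + 1) *
        exp (Δ / 2 * (y + threshold k) - r * (3 * Δ ^ 2 / 8) + Δ / 2 * x) := by
  have hbudget := probeBudget_nonneg K (k + 1)
  cases r with
  | zero =>
    rw [nextState, Nat.cast_zero, zero_add]
    split_ifs with hreject
    · exact le_add_of_nonneg_right (by positivity)
    · have hexp : 0 ≤ Δ / 2 * (y + threshold k) - 0 * (3 * Δ ^ 2 / 8) + Δ / 2 * x := by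
        have := mul_nonneg hΔ (show 0 ≤ y + x + threshold k by linarith)
        linarith
      calc probePotential K Δ (phaseStart (k + 1))
        _ ≤ probeBudget K (k + 1) := probePotential_phaseStart_le hΔ hK h (k + 1)
        _ ≤ probeBudget K (k + 1) * exp _ := le_mul_of_one_le_right hbudget (Real.one_le_exp hexp)
        _ ≤ _ := le_add_of_nonneg_left (by positivity)
  | succ r =>
    rw [nextState, probePotential, if_neg hk.not_gt]
    push_cast
    apply le_of_eq
    ring_nf

lemma probePotential_nextState_commit_le (hΔ : 0 ≤ Δ) (hK : 1 ≤ K) (h : Detectable Δ K)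
    (k : ℕ) (y x : ℝ) :
    probePotential K Δ (nextState (.commit k, y) x) ≤
      0 + probeBudget K (k + 1) * exp (-(y + 1 / 2) + -1 * x) := by
  rw [nextState, zero_add]
  split_ifs with hcredit
  · exact (probePotential_phaseStart_le hΔ hK h (k + 1)).trans
      (le_mul_of_one_le_right (probeBudget_nonneg K _) (Real.one_le_exp (by linarith)))
  · rw [probePotential]
    apply le_of_eq
    ring_nf

lemma probePotential_drift (hΔ : 0 ≤ Δ) (hK : 1 ≤ K) (h : Detectable Δ K) {m : Fin 2 → ℝ}
    (hm₀ : m 0 ≤ -Δ) (hm₁ : 0 ≤ m 1) (s : State) :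
    ENNReal.ofReal (if nextArm s = 0 then 1 else 0) +
      ∫⁻ x, ENNReal.ofReal (probePotential K Δ (nextState s x)) ∂gaussianReal (m (nextArm s)) 1 ≤
      ENNReal.ofReal (probePotential K Δ s) := by
  rcases s with ⟨⟨k, r⟩ | k, y⟩
  all_goals have hbudget := probeBudget_nonneg K (k + 1)
  · rcases lt_or_ge k K with hk | hk
    · refine ofReal_add_lintegral_gaussianReal_le (A := r + probeBudget K (k + 1)) (B := 0)
        (a := 0) (b := 0) (l := 0) (by positivity) le_rfl (by positivity) (fun x => ?_)
        (by simp) ?_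
      · simpa using probePotential_nextState_probe_le_of_lt hΔ hK h hk r y x
      · simp only [nextArm, probePotential, if_pos hk, if_true]
        linarith
    · refine ofReal_add_lintegral_gaussianReal_le (a := -Δ ^ 2 / 2) (by positivity) hbudget
        (by positivity) (probePotential_nextState_probe_le_of_ge hΔ hK h hk r y)
        (by rw [nextArm]; nlinarith) ?_
      simp only [nextArm, probePotential, if_neg hk.not_gt, if_true, NNReal.coe_one]
      apply le_of_eq
      ring_nf
  · refine ofReal_add_lintegral_gaussianReal_le (a := 0) le_rfl hbudget (by positivity)
      (probePotential_nextState_commit_le hΔ hK h k y) (by simpa [nextArm] using hm₁) ?_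
    simp only [nextArm, probePotential, one_ne_zero, if_false, NNReal.coe_one]
    apply le_of_eq
    ring_nf

end BadArmZero

section Regret

variable {Θ : Type*} {μ : Fin 2 → Θ → ℝ} {P : Θ → Measure Traj} {θ : Θ}

lemma IsEnv.expRegret_phasedProbing_le_of_good (hP : IsEnv μ phasedProbing.toAlg P)
    (h₀ : 0 ≤ μ 0 θ) (h₁ : μ 1 θ ≤ -1) (n : ℕ) :
    expRegret μ phasedProbing.toAlg P θ n ≤ (μ 0 θ - μ 1 θ) * (9 * exp 1) := by
  have hinit : commitPotential (phaseStart 0) = 9 * exp 1 := by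
    simp [commitPotential_phaseStart]
  rw [← hinit]
  exact hP.expRegret_le_of_drift one_ne_zero (by linarith) measurable_commitPotential
    (hinit.symm ▸ by positivity : (0 : ℝ) ≤ commitPotential (phaseStart 0))
    (phaseStart_mem_positiveCredit 0) (fun s _ x => nextState_mem_positiveCredit s x)
    (commitPotential_drift (m := fun i => μ i θ) h₀ h₁) n

lemma IsEnv.expRegret_phasedProbing_le_of_bad (hP : IsEnv μ phasedProbing.toAlg P) {Δ : ℝ}
    {K : ℕ} (hΔ : 0 ≤ Δ) (hK : 1 ≤ K) (h : Detectable Δ K) (h₀ : μ 0 θ ≤ -Δ) (h₁ : 0 ≤ μ 1 θ)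
    (n : ℕ) :
    expRegret μ phasedProbing.toAlg P θ n ≤ (μ 1 θ - μ 0 θ) * (4 * 2 ^ K) := by
  have hbudget : probeBudget K 0 ≤ 4 * 2 ^ K := by simp [probeBudget]
  have hinit : 0 ≤ probePotential K Δ (phaseStart 0) := by
    have := probeBudget_nonneg K (0 + 1)
    rw [phaseStart, probePotential]
    positivity
  have hgap : 0 ≤ μ 1 θ - μ 0 θ := by linarith
  calc expRegret μ phasedProbing.toAlg P θ n
    _ ≤ (μ 1 θ - μ 0 θ) * probePotential K Δ (phaseStart 0) :=
      hP.expRegret_le_of_drift zero_ne_one (sub_nonneg.1 hgap) (measurable_probePotential K Δ)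
        hinit (Set.mem_univ _) (fun _ _ _ => Set.mem_univ _)
        (fun s _ => probePotential_drift hΔ hK h (m := fun i => μ i θ) h₀ h₁ s) n
    _ ≤ (μ 1 θ - μ 0 θ) * (4 * 2 ^ K) := by
      gcongr
      exact (probePotential_phaseStart_le hΔ hK h 0).trans hbudget

end Regret

theorem finite_regret_ambiguous_example_general :
    ∃ alg : Alg, ∃ C > (0 : ℝ), ∃ Δ₀ > (0 : ℝ), ∀ {Θ : Type*} {μ : Fin 2 → Θ → ℝ}
      {P : Θ → Measure Traj}, IsEnv μ alg P → ∀ (θ : Θ) (n : ℕ),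
        (∀ Δ, 0 < Δ → Δ ≤ Δ₀ → μ 0 θ ≤ -Δ → 0 ≤ μ 1 θ → expRegret μ alg P θ n ≤
          C * ((μ 1 θ - μ 0 θ) / Δ ^ 2) * Real.log (Real.log (1 / Δ))) ∧
        (0 ≤ μ 0 θ → μ 1 θ ≤ -1 → expRegret μ alg P θ n ≤ C * (μ 0 θ - μ 1 θ)) := by
  refine ⟨phasedProbing.toAlg, 256, by norm_num, exp (-8), by positivity, fun {_ μ P} hP θ n =>
    ⟨?_, ?_⟩⟩
  · intro Δ hΔ hΔ₀ h₀ h₁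
    obtain ⟨K, hK, hdetect, hpow⟩ := exists_detectable hΔ hΔ₀
    have hgap : 0 ≤ μ 1 θ - μ 0 θ := by linarith
    calc expRegret μ phasedProbing.toAlg P θ n
      _ ≤ (μ 1 θ - μ 0 θ) * (4 * 2 ^ K) :=
        hP.expRegret_phasedProbing_le_of_bad hΔ.le hK hdetect h₀ h₁ n
      _ ≤ (μ 1 θ - μ 0 θ) * (4 * (64 * Real.log (Real.log (1 / Δ)) / Δ ^ 2)) := by gcongr
      _ = 256 * ((μ 1 θ - μ 0 θ) / Δ ^ 2) * Real.log (Real.log (1 / Δ)) := by ring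
  · intro h₀ h₁
    refine (hP.expRegret_phasedProbing_le_of_good h₀ h₁ n).trans ?_
    nlinarith [Real.exp_one_lt_d9]

/-- **Theorem 8.** For the two-armed structured bandit with `Θ = [−1,1]`,
`μ₁(θ) = −θ·1{θ > 0}`, `μ₂(θ) = −1{θ ≤ 0}` and unit-variance normal rewards, there is an
algorithm and a constant `C > 0` such that, uniformly in `n`: `E_θ R_n(θ) ≤ C` for all
`θ ∈ [−1,0]`, and `E_θ R_n(θ) ≤ C·(1/θ)·log log(1/θ)` for all small enough `θ > 0`. -/
theorem finite_regret_ambiguous_example :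
    ∃ alg : Alg, ∀ P : ℝ → Measure Traj, IsEnv muAmb alg P →
      ∃ C > (0 : ℝ), ∃ θ₀ > (0 : ℝ),
        (∀ θ : ℝ, 0 < θ → θ ≤ θ₀ → ∀ n : ℕ,
          expRegret muAmb alg P θ n ≤ C * (1 / θ) * Real.log (Real.log (1 / θ))) ∧
        (∀ θ : ℝ, -1 ≤ θ → θ ≤ 0 → ∀ n : ℕ,
          expRegret muAmb alg P θ n ≤ C) := by
  obtain ⟨alg, C, hC, θ₀, hθ₀, hregret⟩ := finite_regret_ambiguous_example_general
  refine ⟨alg, fun P hP => ⟨C, hC, θ₀, hθ₀, fun θ hθ hθ_le n => ?_, fun θ _ hθ n => ?_⟩⟩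
  · have hdiv : θ / θ ^ 2 = 1 / θ := by field_simp
    simpa [muAmb, hθ, hθ.not_ge, hdiv] using (hregret hP θ n).1 θ hθ hθ_le
  · simpa [muAmb, hθ, hθ.not_gt] using (hregret hP θ n).2

end TwoArmedBandit
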